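/- Let T be an ideal of the free t-step nilpotent Lie algebra n_{d,t} with n_{d,t}^t ⊄ T ⊆ n_{d,t}². Then the natural map Aut_T(n_{d,t}) → Aut(n_{d,t}/T) is surjective, and hence Aut(n_{d,t}/T) is isomorphic to the quotient group Aut_T(n_{d,t}) / Aut°_T(n_{d,t}), where Aut°_T(n_{d,t}) = {Φ : Im(Φ − Id) ⊆ T}. -/

import Mathlib

/-!
Write `n = n_{d,t}`. An automorphism `α` of `n / T` lifts to an endomorphism `φ` of `n`: lift the
images of the generators to `n` and extend by freeness (`freeNilpotent_exists_lift`). Likewise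
`α⁻¹` lifts to some `ψ`. Both `φ ∘ ψ` and `ψ ∘ φ` are the identity modulo `T`, hence modulo the
derived algebra, since `T ⊆ [n, n]`. An endomorphism `χ` of a nilpotent Lie algebra that is the
identity modulo the derived algebra is bijective (`bijective_of_sub_mem`): `χ - 1` shifts the lower
central series by one, so it is nilpotent. Hence `φ` is an automorphism, and it preserves `T`
because it lifts the injective map `α`. The kernel is read off directly, and the isomorphism is the
first isomorphism theorem.
-/

/-- The free `t`-step nilpotent Lie algebra on `d` generators over `F`. -/
abbrev freeNilpotent (F : Type*) [Field F] (d t : ℕ) :=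
  FreeLieAlgebra F (Fin d) ⧸
    LieModule.lowerCentralSeries F (FreeLieAlgebra F (Fin d)) (FreeLieAlgebra F (Fin d)) t

/-- The group of Lie algebra automorphisms of `L`, with multiplication `f * g = f ∘ g`. -/
instance lieAutGroup (R L : Type*) [CommRing R] [LieRing L] [LieAlgebra R L] :
    Group (L ≃ₗ⁅R⁆ L) where
  mul f g := g.trans f
  one := 1
  inv := LieEquiv.symm
  mul_assoc _ _ _ := LieEquiv.ext fun _ => rfl
  one_mul _ := LieEquiv.ext fun _ => rfl
  mul_one _ := LieEquiv.ext fun _ => rfl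
  inv_mul_cancel f := f.self_trans_symm

/-- An endomorphism of a Lie algebra which is the identity modulo the derived algebra is the identity
on each successive quotient of the lower central series. -/
theorem sub_mem_lowerCentralSeries_succ {R L : Type*} [CommRing R] [LieRing L] [LieAlgebra R L]
    (χ : L →ₗ⁅R⁆ L) (hχ : ∀ x, χ x - x ∈ LieModule.lowerCentralSeries R L L 1) (k : ℕ) :
    ∀ x ∈ LieModule.lowerCentralSeries R L L k,
      χ x - x ∈ LieModule.lowerCentralSeries R L L (k + 1) := by
  -- `⁅L¹, Lᵏ⁆ ≤ Lᵏ⁺²`, by the Jacobi identity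
  have key : ∀ (k : ℕ), ∀ y ∈ LieModule.lowerCentralSeries R L L 1,
      ∀ m ∈ LieModule.lowerCentralSeries R L L k,
      ⁅y, m⁆ ∈ LieModule.lowerCentralSeries R L L (k + 2) := by
    intro k y hy m hm
    rw [LieModule.lowerCentralSeries_succ, ← LieSubmodule.mem_toSubmodule,
      LieSubmodule.lieIdeal_oper_eq_linear_span'] at hy
    induction hy using Submodule.span_induction with
    | mem z hz =>
      obtain ⟨a, -, b, -, rfl⟩ := hz
      have step : ∀ (c : L) (j : ℕ), ∀ n ∈ LieModule.lowerCentralSeries R L L j,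
          ⁅c, n⁆ ∈ LieModule.lowerCentralSeries R L L (j + 1) := by
        intro c j n hn
        rw [LieModule.lowerCentralSeries_succ]
        exact LieSubmodule.lie_mem_lie (LieSubmodule.mem_top c) hn
      rw [lie_lie]
      exact sub_mem (step _ _ _ (step _ _ _ hm)) (step _ _ _ (step _ _ _ hm))
    | zero => simp
    | add u v _ _ hu hv => rw [add_lie]; exact add_mem hu hv
    | smul r u _ hu => rw [smul_lie]; exact SMulMemClass.smul_mem r hu
  induction k with
  | zero => exact fun x _ => hχ x
  | succ k ih =>
    intro x hx
    rw [LieModule.lowerCentralSeries_succ, ← LieSubmodule.mem_toSubmodule,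
      LieSubmodule.lieIdeal_oper_eq_linear_span'] at hx
    induction hx using Submodule.span_induction with
    | mem z hz =>
      obtain ⟨a, -, m, hm, rfl⟩ := hz
      have hm' := ih m hm
      have hle : LieModule.lowerCentralSeries R L L (k + 1) ≤
          LieModule.lowerCentralSeries R L L k :=
        LieModule.antitone_lowerCentralSeries R L L (Nat.le_succ k)
      have e : χ ⁅a, m⁆ - ⁅a, m⁆ = ⁅χ a - a, χ m⁆ + ⁅a, χ m - m⁆ := by
        rw [LieHom.map_lie, sub_lie, lie_sub]; abel
      have hχm : χ m ∈ LieModule.lowerCentralSeries R L L k := by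
        simpa using add_mem (hle hm') hm
      rw [e]
      refine add_mem (key k _ (hχ a) _ hχm) ?_
      rw [LieModule.lowerCentralSeries_succ]
      exact LieSubmodule.lie_mem_lie (LieSubmodule.mem_top a) hm'
    | zero => simp
    | add u v _ _ hu hv => rw [map_add, add_sub_add_comm]; exact add_mem hu hv
    | smul r u _ hu => rw [map_smul, ← smul_sub]; exact SMulMemClass.smul_mem r hu

/-- In a nilpotent Lie algebra, `χ - 1` is nilpotent because it shifts the lower central series, so
`χ` is invertible. -/
theorem bijective_of_sub_mem {R L : Type*} [CommRing R] [LieRing L] [LieAlgebra R L] {t : ℕ}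
    (ht : LieModule.lowerCentralSeries R L L t = ⊥) (χ : L →ₗ⁅R⁆ L)
    (hχ : ∀ x, χ x - x ∈ LieModule.lowerCentralSeries R L L 1) : Function.Bijective χ := by
  set N : Module.End R L := (χ : L →ₗ[R] L) - 1 with hN
  have hpow : ∀ k x, (N ^ k) x ∈ LieModule.lowerCentralSeries R L L k := by
    intro k
    induction k with
    | zero => simp
    | succ k ih =>
      intro x
      rw [pow_succ', Module.End.mul_apply]
      exact sub_mem_lowerCentralSeries_succ χ hχ k _ (ih x)
  have hnil : IsNilpotent N := ⟨t, LinearMap.ext fun x => by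
    simpa [ht] using hpow t x⟩
  have hu : IsUnit (1 + N) := hnil.isUnit_one_add
  rw [hN, add_sub_cancel, Module.End.isUnit_iff] at hu
  exact hu

/-- The quotient map by a Lie ideal, as a homomorphism of Lie algebras. -/
def lieQuotientMk {R L : Type*} [CommRing R] [LieRing L] [LieAlgebra R L] (I : LieIdeal R L) :
    L →ₗ⁅R⁆ L ⧸ I where
  toLinearMap := I.toSubmodule.mkQ
  map_lie' := rfl

theorem freeNilpotent_lowerCentralSeries_eq_bot (F : Type*) [Field F] (d t : ℕ) :
    LieModule.lowerCentralSeries F (freeNilpotent F d t) (freeNilpotent F d t) t = ⊥ := by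
  have hs : Function.Surjective (lieQuotientMk (LieModule.lowerCentralSeries F
      (FreeLieAlgebra F (Fin d)) (FreeLieAlgebra F (Fin d)) t)) :=
    LieSubmodule.Quotient.surjective_mk' _
  rw [← LieIdeal.lowerCentralSeries_map_eq t hs, LieIdeal.map_eq_bot_iff]
  intro x hx
  rw [LieHom.mem_ker]
  exact (LieSubmodule.Quotient.mk_eq_zero').2 hx

/-- Every Lie algebra homomorphism from `n_{d,t}` to a quotient `n_{d,t} / T` lifts along the
quotient map: lift the images of the generators, and use that `n_{d,t}` is free among the
`t`-step nilpotent Lie algebras. -/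
theorem freeNilpotent_exists_lift (F : Type*) [Field F] (d t : ℕ)
    (T : LieIdeal F (freeNilpotent F d t))
    (α : (freeNilpotent F d t ⧸ T) →ₗ⁅F⁆ (freeNilpotent F d t ⧸ T)) :
    ∃ φ : freeNilpotent F d t →ₗ⁅F⁆ freeNilpotent F d t,
      ∀ x, LieSubmodule.Quotient.mk (N := T) (φ x) = α (LieSubmodule.Quotient.mk (N := T) x) := by
  set I := LieModule.lowerCentralSeries F (FreeLieAlgebra F (Fin d)) (FreeLieAlgebra F (Fin d)) t
    with hI
  choose y hy using fun i : Fin d => LieSubmodule.Quotient.surjective_mk' T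
    (α (lieQuotientMk T (lieQuotientMk I (FreeLieAlgebra.of F i))))
  let f : FreeLieAlgebra F (Fin d) →ₗ⁅F⁆ freeNilpotent F d t := FreeLieAlgebra.lift F y
  have hf : ∀ x ∈ I, f x = 0 := by
    intro x hx
    have h := LieIdeal.map_lowerCentralSeries_le (R := F) t (f := f) (LieIdeal.mem_map hx)
    rwa [freeNilpotent_lowerCentralSeries_eq_bot, LieSubmodule.mem_bot] at h
  let φ : freeNilpotent F d t →ₗ⁅F⁆ freeNilpotent F d t :=
    { toLinearMap := I.toSubmodule.liftQ (f : FreeLieAlgebra F (Fin d) →ₗ[F] freeNilpotent F d t) hf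
      map_lie' := by
        intro u v
        obtain ⟨u, rfl⟩ := LieSubmodule.Quotient.surjective_mk' I u
        obtain ⟨v, rfl⟩ := LieSubmodule.Quotient.surjective_mk' I v
        exact f.map_lie u v }
  have hcomp : (lieQuotientMk T).comp f = (α.comp (lieQuotientMk T)).comp (lieQuotientMk I) := by
    ext i
    simp only [LieHom.comp_apply, f, FreeLieAlgebra.lift_of_apply]
    exact hy i
  refine ⟨φ, fun x => ?_⟩
  obtain ⟨x, rfl⟩ := LieSubmodule.Quotient.surjective_mk' I x
  exact LieHom.congr_fun hcomp x

/-- For an ideal `T` of `n_{d,t}` with `n_{d,t}^t ⊄ T ⊆ n_{d,t}²`, the natural map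
`θ : Aut_T(n_{d,t}) → Aut(n_{d,t}/T)` is surjective, its kernel is
`Aut°_T = {Φ : Im(Φ - Id) ⊆ T}`, and hence `Aut(n_{d,t}/T) ≅ Aut_T(n_{d,t}) / Aut°_T(n_{d,t})`. -/
theorem aut_of_quotient (F : Type*) [Field F] [CharZero F] (d t : ℕ) (hd : 2 ≤ d)
    (T : LieIdeal F (freeNilpotent F d t))
    (hT1 : T ≤ LieModule.lowerCentralSeries F (freeNilpotent F d t) (freeNilpotent F d t) 1)
    (hT2 : ¬ LieModule.lowerCentralSeries F (freeNilpotent F d t) (freeNilpotent F d t) (t - 1)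
      ≤ T)
    (G : Subgroup (freeNilpotent F d t ≃ₗ⁅F⁆ freeNilpotent F d t))
    (hG : ∀ Φ : freeNilpotent F d t ≃ₗ⁅F⁆ freeNilpotent F d t, Φ ∈ G ↔
      Submodule.map ((Φ : freeNilpotent F d t ≃ₗ[F] freeNilpotent F d t) :
        freeNilpotent F d t →ₗ[F] freeNilpotent F d t) T.toSubmodule = T.toSubmodule)
    (θ : G →* ((freeNilpotent F d t ⧸ T) ≃ₗ⁅F⁆ (freeNilpotent F d t ⧸ T)))
    (hθ : ∀ (Φ : G) (x : freeNilpotent F d t),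
      θ Φ (LieSubmodule.Quotient.mk (N := T) x) =
        LieSubmodule.Quotient.mk (N := T) ((Φ : freeNilpotent F d t ≃ₗ⁅F⁆ freeNilpotent F d t) x)) :
    Function.Surjective θ ∧
    (∀ Φ : G, Φ ∈ θ.ker ↔
      ∀ x : freeNilpotent F d t,
        (Φ : freeNilpotent F d t ≃ₗ⁅F⁆ freeNilpotent F d t) x - x ∈ T) ∧
    Nonempty ((G ⧸ θ.ker) ≃* ((freeNilpotent F d t ⧸ T) ≃ₗ⁅F⁆ (freeNilpotent F d t ⧸ T))) := by
  have surj : Function.Surjective θ := by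
    intro α
    obtain ⟨φ, hφ⟩ := freeNilpotent_exists_lift F d t T α
    obtain ⟨ψ, hψ⟩ := freeNilpotent_exists_lift F d t T α.symm
    have hbot := freeNilpotent_lowerCentralSeries_eq_bot F d t
    have mk_eq : ∀ x y : freeNilpotent F d t, LieSubmodule.Quotient.mk (N := T) x =
        LieSubmodule.Quotient.mk (N := T) y ↔ x - y ∈ T :=
      fun x y => Submodule.Quotient.eq T.toSubmodule
    have h₁ : Function.Bijective (φ.comp ψ) := bijective_of_sub_mem hbot _ fun x => hT1 <| by
      rw [← mk_eq, LieHom.comp_apply, hφ, hψ]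
      exact α.apply_symm_apply _
    have h₂ : Function.Bijective (ψ.comp φ) := bijective_of_sub_mem hbot _ fun x => hT1 <| by
      rw [← mk_eq, LieHom.comp_apply, hψ, hφ]
      exact α.symm_apply_apply _
    have hbij : Function.Bijective φ :=
      ⟨Function.Injective.of_comp (f := ψ) h₂.1, Function.Surjective.of_comp (g := ψ) h₁.2⟩
    let Φ := LieEquiv.ofBijective φ hbij
    have hΦT : ∀ x, φ x ∈ T ↔ x ∈ T := by
      intro x
      rw [← LieSubmodule.Quotient.mk_eq_zero', hφ, ← LieSubmodule.Quotient.mk_eq_zero']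
      exact map_eq_zero_iff α α.injective
    have hΦ : Φ ∈ G := by
      rw [hG]
      ext y
      constructor
      · rintro ⟨x, hx, rfl⟩
        exact (hΦT x).2 hx
      · intro hy
        obtain ⟨x, rfl⟩ := hbij.2 y
        exact ⟨x, (hΦT x).1 hy, rfl⟩
    refine ⟨⟨Φ, hΦ⟩, LieEquiv.ext fun q => ?_⟩
    obtain ⟨x, rfl⟩ := LieSubmodule.Quotient.surjective_mk' T q
    exact (hθ ⟨Φ, hΦ⟩ x).trans (hφ x)
  refine ⟨surj, fun Φ => ?_, ⟨QuotientGroup.quotientKerEquivOfSurjective θ surj⟩⟩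
  rw [MonoidHom.mem_ker]
  have mk_eq : ∀ x y : freeNilpotent F d t, LieSubmodule.Quotient.mk (N := T) x =
      LieSubmodule.Quotient.mk (N := T) y ↔ x - y ∈ T :=
    fun x y => Submodule.Quotient.eq T.toSubmodule
  constructor
  · intro h x
    rw [← mk_eq, ← hθ, h]
    rfl
  · intro h
    refine LieEquiv.ext fun q => ?_
    obtain ⟨x, rfl⟩ := LieSubmodule.Quotient.surjective_mk' T q
    exact (hθ Φ x).trans ((mk_eq _ _).2 (h x))
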